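/- The four-negacirculant Z4-code of length 56 determined by the 14×14 negacirculant matrices A with first row (1,1,1,3,0,2,1,3,1,1,2,2,1,2) and B with first row (3,0,1,0,1,1,1,0,0,0,1,0,0,0) is an extremal Type II Z4-code of length 56 (a self-dual code with all Euclidean weights divisible by 8 and minimum Euclidean weight 24) with minimum Lee weight 18. -/

import Mathlib

open Finset

namespace Z4Note

variable {ι : Type*} [Fintype ι]

/-- Hamming weight of a binary vector. -/
def hWt (x : ι → ZMod 2) : ℕ := (Finset.univ.filter fun i => x i ≠ 0).card

/-- Lee value of an element of `ZMod 4`:  0 ↦ 0, 1 ↦ 1, 2 ↦ 2, 3 ↦ 1. -/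
def leeVal (a : ZMod 4) : ℕ := min a.val (4 - a.val)

/-- Lee weight `n₁(x) + 2 n₂(x) + n₃(x)`. -/
def leeWt (x : ι → ZMod 4) : ℕ := ∑ i, leeVal (x i)

/-- Euclidean weight `n₁(x) + 4 n₂(x) + n₃(x)`. -/
def eucWt (x : ι → ZMod 4) : ℕ := ∑ i, (leeVal (x i)) ^ 2

/-- Number of coordinates of `x` equal to `a`. -/
def nCount (a : ZMod 4) (x : ι → ZMod 4) : ℕ := (Finset.univ.filter fun i => x i = a).card

/-- Dual of a `ZMod 4`-code (as a set), w.r.t. the standard inner product. -/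
def dualZ4 (C : Set (ι → ZMod 4)) : Set (ι → ZMod 4) :=
  {x | ∀ y ∈ C, ∑ i, x i * y i = 0}

/-- Dual of a binary code (as a set), w.r.t. the standard inner product. -/
def dual2 (C : Set (ι → ZMod 2)) : Set (ι → ZMod 2) :=
  {x | ∀ y ∈ C, ∑ i, x i * y i = 0}

/-- A `ZMod 4`-code is self-dual if it equals its dual. -/
def SelfDualZ4 (C : Submodule (ZMod 4) (ι → ZMod 4)) : Prop :=
  (C : Set (ι → ZMod 4)) = dualZ4 (C : Set (ι → ZMod 4))

/-- A binary code is self-dual if it equals its dual. -/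
def SelfDual2 (D : Submodule (ZMod 2) (ι → ZMod 2)) : Prop :=
  (D : Set (ι → ZMod 2)) = dual2 (D : Set (ι → ZMod 2))

/-- Coordinatewise reduction modulo 2. -/
def res2 (x : ι → ZMod 4) : ι → ZMod 2 :=
  fun i => ZMod.castHom (by norm_num : (2:ℕ) ∣ 4) (ZMod 2) (x i)

/-- The residue code `C⁽¹⁾ = {c mod 2 : c ∈ C}`. -/
def residue (C : Set (ι → ZMod 4)) : Set (ι → ZMod 2) := res2 '' C

/-- Minimum Lee weight among nonzero codewords. -/
noncomputable def minLee (C : Set (ι → ZMod 4)) : ℕ := sInf {d | ∃ x ∈ C, x ≠ 0 ∧ leeWt x = d}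

/-- Minimum Euclidean weight among nonzero codewords. -/
noncomputable def minEuc (C : Set (ι → ZMod 4)) : ℕ := sInf {d | ∃ x ∈ C, x ≠ 0 ∧ eucWt x = d}

/-- Minimum Hamming weight among nonzero codewords of a binary code. -/
noncomputable def minHam (C : Set (ι → ZMod 2)) : ℕ := sInf {d | ∃ x ∈ C, x ≠ 0 ∧ hWt x = d}

/-- A binary code is doubly even if all weights are divisible by 4. -/
def DoublyEven (C : Set (ι → ZMod 2)) : Prop := ∀ x ∈ C, 4 ∣ hWt x

/-- A binary code is singly even if some codeword has weight not divisible by 4. -/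
def SinglyEven (C : Set (ι → ZMod 2)) : Prop := ∃ x ∈ C, ¬ 4 ∣ hWt x

/-- A self-dual `ZMod 4`-code is Type II if all Euclidean weights are divisible by 8. -/
def TypeII (C : Set (ι → ZMod 4)) : Prop := ∀ x ∈ C, 8 ∣ eucWt x

/-- The doubly even subcode of a binary code. -/
def evenSubcode (D : Set (ι → ZMod 2)) : Set (ι → ZMod 2) := {x ∈ D | 4 ∣ hWt x}

/-- The shadow `S = D₀^⊥ \ D` of a binary code. -/
def shadow (D : Set (ι → ZMod 2)) : Set (ι → ZMod 2) := dual2 (evenSubcode D) \ D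

/-- A binary singly even self-dual code is s-extremal if equality holds in the
Bachoc–Gaborit bound relating the minimum weight of the code and of its shadow. -/
def SExtremal (D : Submodule (ZMod 2) (ι → ZMod 2)) : Prop :=
  SelfDual2 D ∧ SinglyEven (D : Set (ι → ZMod 2)) ∧
  ((¬ (Fintype.card ι % 24 = 22 ∧
        minHam (D : Set (ι → ZMod 2)) = 4 * (Fintype.card ι / 24) + 6)) →
      minHam (shadow (D : Set (ι → ZMod 2))) + 2 * minHam (D : Set (ι → ZMod 2)) =
        Fintype.card ι / 2 + 4) ∧
  ((Fintype.card ι % 24 = 22 ∧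
        minHam (D : Set (ι → ZMod 2)) = 4 * (Fintype.card ι / 24) + 6) →
      minHam (shadow (D : Set (ι → ZMod 2))) + 2 * minHam (D : Set (ι → ZMod 2)) =
        Fintype.card ι / 2 + 8)

/-- Equivalence of `ZMod 4`-codes: coordinate permutation together with sign changes. -/
def Z4Equiv (C C' : Set (ι → ZMod 4)) : Prop :=
  ∃ σ : Equiv.Perm ι, ∃ ε : ι → ZMod 4, (∀ i, ε i = 1 ∨ ε i = -1) ∧
    C' = (fun x => fun i => ε i * x (σ i)) '' C

/-- Covering radius of a binary code. -/
noncomputable def covRad (C : Set (ι → ZMod 2)) : ℕ :=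
  sInf {R | ∀ v : ι → ZMod 2, ∃ c ∈ C, hWt (v - c) ≤ R}

/-- Entry `(i,j)` of the circulant matrix with first row `r`. -/
def circEntry {m : ℕ} (r : Fin m → ZMod 4) (i j : Fin m) : ZMod 4 := r (j - i)

/-- Entry `(i,j)` of the negacirculant matrix with first row `r`. -/
def negaEntry {m : ℕ} (r : Fin m → ZMod 4) (i j : Fin m) : ZMod 4 :=
  if i.val ≤ j.val then r (j - i) else - r (j - i)

/-- The bordered part `B` of the generator matrix of a bordered double circulant code. -/
def bdcB {m : ℕ} (α β γ : ZMod 4) (r : Fin m → ZMod 4) :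
    Fin (m+1) → Fin (m+1) → ZMod 4 :=
  Fin.cases (Fin.cases α fun _ => β) (fun i' => Fin.cases γ fun j' => circEntry r i' j')

/-- Row `i` of the generator matrix `(I | B)` of a bordered double circulant code. -/
def bdcRow {m : ℕ} (α β γ : ZMod 4) (r : Fin m → ZMod 4) (i : Fin (m+1)) :
    (Fin (m+1) ⊕ Fin (m+1)) → ZMod 4 :=
  Sum.elim (fun j => if j = i then 1 else 0) (bdcB α β γ r i)

/-- The bordered double circulant code of length `2(m+1)`. -/
def bdcCode {m : ℕ} (α β γ : ZMod 4) (r : Fin m → ZMod 4) :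
    Submodule (ZMod 4) ((Fin (m+1) ⊕ Fin (m+1)) → ZMod 4) :=
  Submodule.span (ZMod 4) (Set.range (bdcRow α β γ r))

/-- The block matrix `[[A, B], [-Bᵀ, Aᵀ]]` built from negacirculant `A`, `B`. -/
def fourNegaM {n : ℕ} (a b : Fin n → ZMod 4) :
    (Fin n ⊕ Fin n) → (Fin n ⊕ Fin n) → ZMod 4
  | Sum.inl i, Sum.inl j => negaEntry a i j
  | Sum.inl i, Sum.inr j => negaEntry b i j
  | Sum.inr i, Sum.inl j => - negaEntry b j i
  | Sum.inr i, Sum.inr j => negaEntry a j i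

/-- Row `i` of the generator matrix `(I | M)` of a four-negacirculant code. -/
def fourNegaRow {n : ℕ} (a b : Fin n → ZMod 4) (i : Fin n ⊕ Fin n) :
    ((Fin n ⊕ Fin n) ⊕ (Fin n ⊕ Fin n)) → ZMod 4 :=
  Sum.elim (fun j => if j = i then 1 else 0) (fourNegaM a b i)

/-- The four-negacirculant code of length `4n`. -/
def fourNegaCode {n : ℕ} (a b : Fin n → ZMod 4) :
    Submodule (ZMod 4) (((Fin n ⊕ Fin n) ⊕ (Fin n ⊕ Fin n)) → ZMod 4) :=
  Submodule.span (ZMod 4) (Set.range (fourNegaRow a b))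

end Z4Note

/-!
The code is systematic with generator matrix `(I | M)`, and `M Mᵀ = -I` makes it self-dual. As `8`
divides all Euclidean weights, which are `n₁ + n₃ + 4 n₂`, both minimum weights follow once every
codeword with an odd coordinate has at least `12` of them and Euclidean weight other than `16`. The
codewords to be excluded have few odd coordinates: `12` of them and `n₂ = 1`, `16` of them and
`n₂ = 0`, or fewer than `12`. Since the code has the generator matrices `(I | M)` and `(-Mᵀ | I)`,
it is enough to look at combinations of rows with at most `8` odd coefficients for the first one and
at most `7` for the second one. This is a finite search, carried out by the kernel. Negacyclic
shifts and the cycle lemma reduce the sets of odd coefficients to be visited, the number of odd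
coordinates of a codeword depends only on that set, and the signs and the coordinates `2` are tried
all at once by arithmetic on large numbers with one field per coordinate.
-/

namespace Z4Note

open Matrix

section Weights

variable {ι κ : Type*}

theorem res2_ne_zero_iff (x : ι → ZMod 4) (i : ι) : res2 x i ≠ 0 ↔ x i = 1 ∨ x i = 3 := by
  rw [res2]
  generalize x i = a
  decide +revert

theorem res2_eq_zero_iff (x : ι → ZMod 4) : res2 x = 0 ↔ ∀ i, x i = 0 ∨ x i = 2 := by
  refine funext_iff.trans (forall_congr' fun i => ?_)
  rw [res2, Pi.zero_apply]
  generalize x i = a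
  decide +revert

theorem exists_two_smul_of_res2_eq_zero {x : ι → ZMod 4} (hx : res2 x = 0) :
    ∃ y, x = (2 : ZMod 4) • y := by
  refine ⟨fun i => if x i = 2 then 1 else 0, funext fun i => ?_⟩
  rcases (res2_eq_zero_iff x).mp hx i with h | h <;> simp [h]

theorem res2_two_smul (y : ι → ZMod 4) : res2 ((2 : ZMod 4) • y) = 0 := by
  rw [res2_eq_zero_iff]
  intro i
  rw [Pi.smul_apply]
  generalize y i = a
  decide +revert

variable [Fintype ι] [Fintype κ]

theorem hWt_res2_eq_sum (x : ι → ZMod 4) :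
    hWt (res2 x) = ∑ i, if x i = 1 ∨ x i = 3 then 1 else 0 := by
  simp only [hWt, card_filter, res2_ne_zero_iff]

theorem hWt_res2_eq_zero_iff (x : ι → ZMod 4) : hWt (res2 x) = 0 ↔ res2 x = 0 := by
  simp [hWt, filter_eq_empty_iff, funext_iff]

theorem hWt_res2_sumElim (u : ι → ZMod 4) (v : κ → ZMod 4) :
    hWt (res2 (Sum.elim u v)) = hWt (res2 u) + hWt (res2 v) := by
  simp only [hWt, card_filter, Fintype.sum_sum_type]
  rfl

theorem leeWt_eq_hWt_add_nCount (x : ι → ZMod 4) :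
    leeWt x = hWt (res2 x) + 2 * nCount 2 x := by
  have leeVal_eq : ∀ a : ZMod 4,
      leeVal a = (if a = 1 ∨ a = 3 then 1 else 0) + 2 * if a = 2 then 1 else 0 := by decide
  simp only [leeWt, leeVal_eq, hWt_res2_eq_sum, nCount, card_filter, sum_add_distrib, mul_sum]

theorem eucWt_eq_hWt_add_nCount (x : ι → ZMod 4) :
    eucWt x = hWt (res2 x) + 4 * nCount 2 x := by
  have leeVal_sq_eq : ∀ a : ZMod 4,
      leeVal a ^ 2 = (if a = 1 ∨ a = 3 then 1 else 0) + 4 * if a = 2 then 1 else 0 := by decide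
  simp only [eucWt, leeVal_sq_eq, hWt_res2_eq_sum, nCount, card_filter, sum_add_distrib, mul_sum]

theorem eucWt_sumElim (u : ι → ZMod 4) (v : κ → ZMod 4) :
    eucWt (Sum.elim u v) = eucWt u + eucWt v := by
  simp only [eucWt, Fintype.sum_sum_type, Sum.elim_inl, Sum.elim_inr]

theorem nCount_two_smul (y : ι → ZMod 4) : nCount 2 ((2 : ZMod 4) • y) = hWt (res2 y) := by
  have two_mul_eq_two : ∀ a : ZMod 4, 2 * a = 2 ↔ a = 1 ∨ a = 3 := by decide
  simp only [nCount, card_filter, hWt_res2_eq_sum, Pi.smul_apply, smul_eq_mul, two_mul_eq_two]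

theorem eight_dvd_eucWt_add {x y : ι → ZMod 4} (hx : 8 ∣ eucWt x) (hy : 8 ∣ eucWt y)
    (hxy : ∑ i, x i * y i = 0) : 8 ∣ eucWt (x + y) := by
  have leeVal_sq_add : ∀ a b : ZMod 4, ((leeVal (a + b) ^ 2 : ℕ) : ZMod 8) =
      (leeVal a ^ 2 + leeVal b ^ 2 + 2 * (a.val * b.val) : ℕ) := by decide
  have hdot : 4 ∣ ∑ i, (x i).val * (y i).val := by
    rw [← ZMod.natCast_eq_zero_iff]
    simpa using hxy
  have hsum : ((eucWt (x + y) : ℕ) : ZMod 8) =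
      (eucWt x + eucWt y + 2 * ∑ i, (x i).val * (y i).val : ℕ) := by
    simp only [eucWt, mul_sum, ← sum_add_distrib]
    rw [Nat.cast_sum, Nat.cast_sum]
    exact sum_congr rfl fun i _ => leeVal_sq_add _ _
  rw [← ZMod.natCast_eq_zero_iff, hsum, ZMod.natCast_eq_zero_iff]
  exact (hx.add hy).add (mul_dvd_mul_left 2 hdot)

theorem eight_dvd_eucWt_smul (a : ZMod 4) {x : ι → ZMod 4} (hx : 8 ∣ eucWt x) :
    8 ∣ eucWt (a • x) := by
  have leeVal_sq_mul : ∀ a b : ZMod 4,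
      ((leeVal (a * b) ^ 2 : ℕ) : ZMod 8) = (a.val ^ 2 * leeVal b ^ 2 : ℕ) := by decide
  have hsum : ((eucWt (a • x) : ℕ) : ZMod 8) = (a.val ^ 2 * eucWt x : ℕ) := by
    simp only [eucWt, mul_sum]
    rw [Nat.cast_sum, Nat.cast_sum]
    exact sum_congr rfl fun i _ => leeVal_sq_mul _ _
  rw [← ZMod.natCast_eq_zero_iff, hsum, ZMod.natCast_eq_zero_iff]
  exact hx.mul_left _

theorem typeII_span {S : Set (ι → ZMod 4)}
    (horth : (Submodule.span (ZMod 4) S : Set (ι → ZMod 4)) ⊆ dualZ4 (Submodule.span (ZMod 4) S))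
    (hS : ∀ x ∈ S, 8 ∣ eucWt x) : TypeII (Submodule.span (ZMod 4) S : Set (ι → ZMod 4)) := by
  intro x hx
  induction hx using Submodule.span_induction with
  | mem x hx => exact hS x hx
  | zero => simp [eucWt, leeVal]
  | add x y hx hy ihx ihy => exact eight_dvd_eucWt_add ihx ihy (horth hx y hy)
  | smul a x _ ih => exact eight_dvd_eucWt_smul a ih

theorem minEuc_eq {C : Set (ι → ZMod 4)} {d : ℕ} (hd : ∃ x ∈ C, x ≠ 0 ∧ eucWt x = d)
    (h : ∀ x ∈ C, x ≠ 0 → d ≤ eucWt x) : minEuc C = d :=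
  IsLeast.csInf_eq ⟨hd, by rintro _ ⟨x, hx, hx0, rfl⟩; exact h x hx hx0⟩

theorem minLee_eq {C : Set (ι → ZMod 4)} {d : ℕ} (hd : ∃ x ∈ C, x ≠ 0 ∧ leeWt x = d)
    (h : ∀ x ∈ C, x ≠ 0 → d ≤ leeWt x) : minLee C = d :=
  IsLeast.csInf_eq ⟨hd, by rintro _ ⟨x, hx, hx0, rfl⟩; exact h x hx hx0⟩

end Weights

section SystematicCode

variable {ι κ : Type*} [DecidableEq ι]

/-- The `ZMod 4`-code with systematic generator matrix `(I | M)`. -/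
def systematicCode (M : Matrix ι κ (ZMod 4)) : Submodule (ZMod 4) (ι ⊕ κ → ZMod 4) :=
  Submodule.span (ZMod 4) (Set.range fun i => Sum.elim (Pi.single i 1) (M i))

theorem mem_systematicCode [Fintype ι] {M : Matrix ι κ (ZMod 4)} {x : ι ⊕ κ → ZMod 4} :
    x ∈ systematicCode M ↔ ∃ u, Sum.elim u (u ᵥ* M) = x := by
  rw [systematicCode, Submodule.mem_span_range_iff_exists_fun]
  refine exists_congr fun u => Eq.congr_left (funext ?_)
  rintro (i | j)
  · simp [Pi.single_apply]
  · simp [vecMul, dotProduct]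

theorem fourNegaCode_eq_systematicCode {n : ℕ} (a b : Fin n → ZMod 4) :
    fourNegaCode a b = systematicCode (fourNegaM a b) :=
  congrArg (Submodule.span (ZMod 4) <| Set.range ·) <| funext fun i =>
    congrArg (Sum.elim · _) <| funext fun j => (Pi.single_apply i 1 j).symm

theorem exists_two_smul_mem_systematicCode [Finite ι] {M : Matrix ι κ (ZMod 4)}
    {x : ι ⊕ κ → ZMod 4} (hx : x ∈ systematicCode M) (hres : res2 x = 0) :
    ∃ y ∈ systematicCode M, x = (2 : ZMod 4) • y := by
  cases nonempty_fintype ι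
  obtain ⟨u, rfl⟩ := mem_systematicCode.mp hx
  obtain ⟨u', rfl⟩ : ∃ u', u = (2 : ZMod 4) • u' :=
    exists_two_smul_of_res2_eq_zero (funext fun i => congrFun hres (.inl i))
  refine ⟨Sum.elim u' (u' ᵥ* M), mem_systematicCode.mpr ⟨u', rfl⟩, ?_⟩
  rw [smul_vecMul]
  exact Sum.elim_comp_inl_inr ((2 : ZMod 4) • Sum.elim u' (u' ᵥ* M))

variable [Fintype ι]

theorem sumElim_mem_systematicCode {M : Matrix ι κ (ZMod 4)} {u : ι → ZMod 4} {v : κ → ZMod 4} :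
    Sum.elim u v ∈ systematicCode M ↔ u ᵥ* M = v := by
  simp only [mem_systematicCode, Sum.elim_eq_iff, exists_eq_left]

theorem sumElim_mem_dualZ4_systematicCode [Fintype κ] {M : Matrix ι κ (ZMod 4)}
    {u : ι → ZMod 4} {v : κ → ZMod 4} :
    Sum.elim u v ∈ dualZ4 (systematicCode M : Set (ι ⊕ κ → ZMod 4)) ↔ u + M *ᵥ v = 0 := by
  have inner_eq (w : ι → ZMod 4) :
      ∑ k, Sum.elim u v k * Sum.elim w (w ᵥ* M) k = (u + M *ᵥ v) ⬝ᵥ w := by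
    rw [Fintype.sum_sum_type, add_dotProduct, ← dotProduct_comm w (M *ᵥ v), dotProduct_mulVec,
      dotProduct_comm _ v]
    rfl
  simp only [dualZ4, Set.mem_ofPred_eq, SetLike.mem_coe, mem_systematicCode,
    forall_exists_index, forall_apply_eq_imp_iff, inner_eq, dotProduct_eq_zero_iff]

variable {M : Matrix ι ι (ZMod 4)}

theorem transpose_mul_self_of_mul_transpose_self (hM : M * Mᵀ = -1) : Mᵀ * M = -1 := by
  rw [← neg_eq_iff_eq_neg, ← neg_mul]
  exact mul_eq_one_comm.mp (by rw [mul_neg, hM, neg_neg])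

theorem selfDualZ4_systematicCode (hM : M * Mᵀ = -1) : SelfDualZ4 (systematicCode M) := by
  ext x
  rw [← Sum.elim_comp_inl_inr x, SetLike.mem_coe, sumElim_mem_systematicCode,
    sumElim_mem_dualZ4_systematicCode, ← mulVec_transpose]
  generalize x ∘ Sum.inl = u, x ∘ Sum.inr = v
  constructor
  · rintro rfl
    rw [mulVec_mulVec, hM, neg_mulVec, one_mulVec, add_neg_cancel]
  · intro h
    rw [eq_neg_of_add_eq_zero_left h, mulVec_neg, mulVec_mulVec,
      transpose_mul_self_of_mul_transpose_self hM, neg_mulVec, one_mulVec, neg_neg]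

theorem eucWt_single_one (i : ι) : eucWt (Pi.single i 1 : ι → ZMod 4) = 1 := by
  rw [eucWt, Fintype.sum_eq_single i fun j hj => by rw [Pi.single_eq_of_ne hj]; rfl,
    Pi.single_eq_same]
  rfl

theorem typeII_systematicCode (hM : M * Mᵀ = -1) (hrow : ∀ i, 8 ∣ 1 + eucWt (M i)) :
    TypeII (systematicCode M : Set (ι ⊕ ι → ZMod 4)) := by
  refine typeII_span (selfDualZ4_systematicCode hM).subset ?_
  rintro _ ⟨i, rfl⟩
  rw [eucWt_sumElim, eucWt_single_one]
  exact hrow i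

theorem le_weights_systematicCode [Fintype κ] {M : Matrix ι κ (ZMod 4)}
    (htype : TypeII (systematicCode M : Set (ι ⊕ κ → ZMod 4)))
    (hres : ∀ x ∈ systematicCode M, res2 x ≠ 0 → 12 ≤ hWt (res2 x) ∧ eucWt x ≠ 16)
    {x : ι ⊕ κ → ZMod 4} (hx : x ∈ systematicCode M) (hx0 : x ≠ 0) :
    24 ≤ eucWt x ∧ 18 ≤ leeWt x := by
  have hE := eucWt_eq_hWt_add_nCount x
  have hL := leeWt_eq_hWt_add_nCount x
  by_cases h0 : res2 x = 0
  · obtain ⟨y, hy, rfl⟩ := exists_two_smul_mem_systematicCode hx h0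
    have hy0 : res2 y ≠ 0 := fun h => hx0 <| by
      obtain ⟨z, rfl⟩ := exists_two_smul_of_res2_eq_zero h
      rw [smul_smul, show (2 * 2 : ZMod 4) = 0 from rfl, zero_smul]
    have := (hres y hy hy0).1
    rw [nCount_two_smul] at hE hL
    omega
  · have := hres x hx h0
    have := htype x hx
    omega

end SystematicCode

section NegacyclicShift

variable {n : ℕ} [NeZero n]

/-- The sign picked up by the coordinate `c` under a negacyclic shift: only the entry in the last
coordinate wraps around. -/
def wrapSign (c : Fin n) : ZMod 4 := if c + 1 = 0 then -1 else 1

theorem wrapSign_eq_one_or (c : Fin n) : wrapSign c = 1 ∨ wrapSign c = -1 := by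
  unfold wrapSign
  split_ifs <;> simp

theorem negaEntry_add_one (r : Fin n → ZMod 4) (i j : Fin n) :
    negaEntry r (i + 1) (j + 1) = wrapSign i * wrapSign j * negaEntry r i j := by
  have val_add_one (c : Fin n) : c.val + 1 < n ∧ (c + 1).val = c.val + 1 ∧ c + 1 ≠ 0 ∨
      c.val + 1 = n ∧ (c + 1).val = 0 ∧ c + 1 = 0 := by
    have hval : (c + 1).val = (c.val + 1) % n := by rw [Fin.val_add, Fin.val_one', Nat.add_mod_mod]
    rw [ne_eq, Fin.ext_iff, hval, Fin.val_zero]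
    rcases Nat.lt_or_eq_of_le c.isLt with h | h
    · exact .inl ⟨h, Nat.mod_eq_of_lt h, by rw [Nat.mod_eq_of_lt h]; omega⟩
    · simp [← Nat.succ_eq_add_one, h]
  unfold negaEntry wrapSign
  rw [add_sub_add_right_eq_sub]
  have := i.isLt
  have := j.isLt
  rcases val_add_one i with ⟨hi, hi', hi0⟩ | ⟨hi, hi', hi0⟩ <;>
  rcases val_add_one j with ⟨hj, hj', hj0⟩ | ⟨hj, hj', hj0⟩ <;>
  simp only [hi', hi0, hj', hj0, if_true, if_false] <;> split_ifs <;> first | omega | simp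

/-- Simultaneous cyclic shift of the two halves of the index set. -/
def blockSucc : Fin n ⊕ Fin n ≃ Fin n ⊕ Fin n :=
  Equiv.sumCongr (Equiv.addRight 1) (Equiv.addRight 1)

/-- The sign picked up by a coordinate under a simultaneous negacyclic shift of both halves. -/
def blockSign : Fin n ⊕ Fin n → ZMod 4 := Sum.elim wrapSign wrapSign

/-- Simultaneous negacyclic (left) shift of the two halves of a vector. -/
def negaShift (u : Fin n ⊕ Fin n → ZMod 4) : Fin n ⊕ Fin n → ZMod 4 :=
  fun i => blockSign i * u (blockSucc i)

/-- Matrices all of whose blocks are negacirculant, i.e. which commute with `negaShift`. -/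
def BlockNegacyclic (A : Matrix (Fin n ⊕ Fin n) (Fin n ⊕ Fin n) (ZMod 4)) : Prop :=
  ∀ i j, A (blockSucc i) (blockSucc j) = blockSign i * blockSign j * A i j

theorem blockNegacyclic_fourNegaM (a b : Fin n → ZMod 4) : BlockNegacyclic (fourNegaM a b) := by
  rintro (i | i) (j | j) <;>
    simp [blockSucc, blockSign, fourNegaM, negaEntry_add_one, mul_comm (wrapSign i)]

variable {A : Matrix (Fin n ⊕ Fin n) (Fin n ⊕ Fin n) (ZMod 4)}

theorem BlockNegacyclic.neg_transpose (hA : BlockNegacyclic A) : BlockNegacyclic (-Aᵀ) := by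
  intro i j
  rw [neg_apply, transpose_apply, hA, neg_apply, transpose_apply, mul_neg,
    mul_comm (blockSign j)]

theorem blockSign_eq_one_or (i : Fin n ⊕ Fin n) : blockSign i = 1 ∨ blockSign i = -1 := by
  cases i <;> exact wrapSign_eq_one_or _

theorem blockSign_mul_self (i : Fin n ⊕ Fin n) : blockSign i * blockSign i = 1 := by
  rcases blockSign_eq_one_or i with h | h <;> simp [h]

theorem negaShift_vecMul (hA : BlockNegacyclic A) (u : Fin n ⊕ Fin n → ZMod 4) :
    negaShift u ᵥ* A = negaShift (u ᵥ* A) := by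
  funext j
  calc ∑ i, blockSign i * u (blockSucc i) * A i j
    _ = ∑ i, blockSign j * (u (blockSucc i) * A (blockSucc i) (blockSucc j)) :=
        sum_congr rfl fun i _ => by
          rw [hA]
          linear_combination -blockSign i * u (blockSucc i) * A i j * blockSign_mul_self j
    _ = blockSign j * ∑ i, u i * A i (blockSucc j) := by
        rw [← mul_sum, Equiv.sum_comp blockSucc fun i => u i * A i (blockSucc j)]

theorem eucWt_negaShift (u : Fin n ⊕ Fin n → ZMod 4) : eucWt (negaShift u) = eucWt u := by
  refine (sum_congr rfl fun i _ => ?_).trans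
    (Equiv.sum_comp blockSucc fun i => leeVal (u i) ^ 2)
  have leeVal_neg : ∀ a, leeVal (-a) = leeVal a := by decide
  rcases blockSign_eq_one_or i with h | h <;> simp [negaShift, h, leeVal_neg]

theorem res2_negaShift (u : Fin n ⊕ Fin n → ZMod 4) (i : Fin n ⊕ Fin n) :
    res2 (negaShift u) i = res2 u (blockSucc i) := by
  rcases blockSign_eq_one_or i with h | h <;> simp [negaShift, res2, h]

theorem hWt_res2_negaShift (u : Fin n ⊕ Fin n → ZMod 4) :
    hWt (res2 (negaShift u)) = hWt (res2 u) := by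
  simp only [hWt, card_filter, res2_negaShift]
  exact Equiv.sum_comp blockSucc fun i => if res2 u i ≠ 0 then 1 else 0

/-- The number of odd coordinates of `u` in the positions congruent to `c` modulo `n` of its two
halves; indexing by `ℕ` turns cyclic shifts into translations. -/
def columnWt (u : Fin n ⊕ Fin n → ZMod 4) (c : ℕ) : ℕ :=
  (if res2 u (.inl (.ofNat n c)) ≠ 0 then 1 else 0) +
    if res2 u (.inr (.ofNat n c)) ≠ 0 then 1 else 0

theorem sum_range_columnWt (u : Fin n ⊕ Fin n → ZMod 4) :
    ∑ c ∈ range n, columnWt u c = hWt (res2 u) := by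
  simp only [hWt, card_filter, Fintype.sum_sum_type, ← sum_add_distrib, sum_range, columnWt,
    Fin.ofNat_val_eq_self]

theorem periodic_columnWt (u : Fin n ⊕ Fin n → ZMod 4) : Function.Periodic (columnWt u) n := by
  intro c
  simp only [columnWt, Fin.ofNat, Nat.add_mod_right]

theorem columnWt_negaShift (u : Fin n ⊕ Fin n → ZMod 4) (c : ℕ) :
    columnWt (negaShift u) c = columnWt u (c + 1) := by
  have : Fin.ofNat n c + 1 = Fin.ofNat n (c + 1) := by simp [Fin.ext_iff, Fin.val_add]
  simp only [columnWt, res2_negaShift, blockSucc, Equiv.sumCongr_apply, Sum.map_inl, Sum.map_inr,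
    Equiv.coe_addRight, this]

/-- Raney's cycle lemma: start reading a periodic sequence where the discrepancy between its
partial sums and their average growth is least. -/
theorem exists_forall_mul_le_mul_sum_range {a : ℕ → ℕ} (ha : Function.Periodic a n) :
    ∃ k, ∀ m, (∑ c ∈ range n, a c) * m ≤ n * ∑ c ∈ range m, a (k + c) := by
  set t := ∑ c ∈ range n, a c
  let discrepancy (m : ℕ) : ℤ := n * ∑ c ∈ range m, a c - t * m
  have periodic_discrepancy : Function.Periodic discrepancy n := fun m => by
    have : ∑ c ∈ range (m + n), a c = t + ∑ c ∈ range m, a c := by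
      rw [add_comm m, sum_range_add]
      exact congrArg (t + ·) (sum_congr rfl fun c _ => by rw [add_comm, ha])
    simp only [discrepancy, this]
    push_cast
    ring
  obtain ⟨k, -, hk⟩ := exists_min_image (range n) discrepancy ⟨0, mem_range.mpr (NeZero.pos n)⟩
  refine ⟨k, fun m => ?_⟩
  have := hk ((k + m) % n) (mem_range.mpr (Nat.mod_lt _ (NeZero.pos n)))
  rw [periodic_discrepancy.map_mod_nat] at this
  simp only [discrepancy, sum_range_add] at this
  zify
  push_cast at this
  linarith

theorem exists_iterate_negaShift_balanced (u : Fin n ⊕ Fin n → ZMod 4) :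
    ∃ k, ∀ m, hWt (res2 u) * m ≤ n * ∑ c ∈ range m, columnWt (negaShift^[k] u) c := by
  have columnWt_iterate (k c) : columnWt (negaShift^[k] u) c = columnWt u (k + c) := by
    induction k generalizing c with
    | zero => rw [Function.iterate_zero, id, Nat.zero_add]
    | succ k ih =>
      rw [Function.iterate_succ_apply', columnWt_negaShift, ih, add_right_comm, add_assoc]
  simpa only [columnWt_iterate, sum_range_columnWt] using
    exists_forall_mul_le_mul_sum_range (periodic_columnWt u)

end NegacyclicShift

section Packing

variable {α : Type*} {k : ℕ} {l : List α} {f g : α → ℕ}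

/-- The vector `(f a)` indexed by the list `l`, stored in consecutive `k`-bit fields of one number,
so that a single arithmetic operation acts on all the coordinates at once. -/
def pack (k : ℕ) (l : List α) (f : α → ℕ) : ℕ := Nat.ofDigits (2 ^ k) (l.map f)

theorem pack_cons (k : ℕ) (a : α) (l : List α) (f : α → ℕ) :
    pack k (a :: l) f = f a + 2 ^ k * pack k l f :=
  Nat.ofDigits_cons ..

theorem pack_congr (h : ∀ a ∈ l, f a = g a) : pack k l f = pack k l g :=
  congrArg (Nat.ofDigits _) (List.map_congr_left h)

theorem pack_add (k : ℕ) (l : List α) (f g : α → ℕ) :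
    pack k l (fun a => f a + g a) = pack k l f + pack k l g := by
  induction l with
  | nil => rfl
  | cons a l ih => rw [pack_cons, pack_cons, pack_cons, ih]; ring

theorem pack_const_mul (k : ℕ) (l : List α) (c : ℕ) (f : α → ℕ) :
    pack k l (fun a => c * f a) = c * pack k l f := by
  induction l with
  | nil => rfl
  | cons a l ih => rw [pack_cons, pack_cons, ih]; ring

theorem pack_zero (k : ℕ) (l : List α) : pack k l (fun _ => 0) = 0 := by
  simpa only [zero_mul] using pack_const_mul k l 0 fun _ => 0

theorem pack_list_sum {β : Type*} (k : ℕ) (l : List α) (L : List β) (f : β → α → ℕ) :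
    pack k l (fun a => (L.map (f · a)).sum) = (L.map fun b => pack k l (f b)).sum := by
  induction L with
  | nil => exact pack_zero k l
  | cons b L ih => simp only [List.map_cons, List.sum_cons, pack_add, ih]

theorem pack_map {β : Type*} (k : ℕ) (l : List β) (g : β → α) (f : α → ℕ) :
    pack k (l.map g) f = pack k l fun b => f (g b) := by
  rw [pack, pack, List.map_map]
  rfl

theorem pack_append (k : ℕ) (l l' : List α) (f : α → ℕ) :
    pack k (l ++ l') f = pack k l f + 2 ^ (k * l.length) * pack k l' f := by
  rw [pack, List.map_append, Nat.ofDigits_append, List.length_map, ← pow_mul]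
  rfl

theorem pack_lt (hk : 0 < k) (h : ∀ a ∈ l, f a < 2 ^ k) : pack k l f < 2 ^ (k * l.length) := by
  rw [pow_mul, ← List.length_map f]
  exact Nat.ofDigits_lt_base_pow_length (Nat.one_lt_two_pow hk.ne') (by simpa using h)

theorem eq_of_pack_eq (hk : 0 < k) (hf : ∀ a ∈ l, f a < 2 ^ k) (hg : ∀ a ∈ l, g a < 2 ^ k)
    (h : pack k l f = pack k l g) : ∀ a ∈ l, f a = g a :=
  List.map_inj_left.mp <| Nat.ofDigits_inj_of_len_eq (Nat.one_lt_two_pow hk.ne')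
    (by rw [List.length_map, List.length_map]) (by simpa using hf) (by simpa using hg) h

theorem pack_land (hf : ∀ a ∈ l, f a < 2 ^ k) (hg : ∀ a ∈ l, g a < 2 ^ k) :
    pack k l f &&& pack k l g = pack k l fun a => f a &&& g a := by
  induction l with
  | nil => exact Nat.zero_and 0
  | cons a l ih =>
    rw [List.forall_mem_cons] at hf hg
    simp only [pack_cons, ← ih hf.2 hg.2]
    refine Nat.eq_of_testBit_eq fun i => ?_
    rw [Nat.testBit_and, add_comm, Nat.testBit_two_pow_mul_add _ hf.1, add_comm,
      Nat.testBit_two_pow_mul_add _ hg.1, add_comm,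
      Nat.testBit_two_pow_mul_add _ (Nat.and_lt_two_pow _ hg.1)]
    split_ifs <;> rw [Nat.testBit_and]

theorem pack_modEq_sum (k : ℕ) (l : List α) (f : α → ℕ) :
    pack k l f ≡ (l.map f).sum [MOD 2 ^ k - 1] := by
  rw [pack, ← Nat.ofDigits_one]
  exact Nat.ofDigits_modEq' _ _ _ (Nat.modEq_sub (Nat.one_le_two_pow)) _

/-- For a number `x` whose fields have the lowest bits `c`, the lowest bit pairs of these fields
which are equal to `10` in binary, i.e. the fields which are `2` modulo `4`. -/
def twos (c x : ℕ) : ℕ := (x &&& (x + c)) &&& (2 * c)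

theorem mod_four_eq_two_of_twos_ne_zero {x : ℕ} (h : twos 1 x ≠ 0) : x % 4 = 2 := by
  have htwo : twos 1 x = ((x &&& (x + 1)).testBit 1).toNat * 2 ^ 1 := Nat.and_two_pow _ 1
  have hbit : (x &&& (x + 1)).testBit 1 = true := by
    contrapose! h
    rw [htwo, Bool.eq_false_of_not_eq_true h, Bool.toNat_false, zero_mul]
  rw [Nat.testBit_and, Bool.and_eq_true, Nat.testBit_eq_decide_div_mod_eq,
    Nat.testBit_eq_decide_div_mod_eq, decide_eq_true_eq, decide_eq_true_eq] at hbit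
  omega

theorem twos_le (c x : ℕ) : twos c x ≤ x := Nat.and_le_left.trans Nat.and_le_left

theorem twos_pack {c : ℕ} (hc : 2 * c < 2 ^ k) (hf : ∀ a ∈ l, f a + c < 2 ^ k) :
    twos (c * pack k l fun _ => 1) (pack k l f) = pack k l fun a => twos c (f a) := by
  have hf' : ∀ a ∈ l, f a < 2 ^ k := fun a ha => (Nat.le_add_right _ _).trans_lt (hf a ha)
  rw [twos, ← mul_assoc, ← pack_const_mul, ← pack_const_mul, ← pack_add, mul_one, mul_one,
    pack_land hf' hf, pack_land (fun a ha => Nat.and_lt_two_pow _ (hf a ha)) fun _ _ => hc]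
  rfl

theorem exists_mod_four_eq_two_of_twos_pack_ne_zero (hk : 1 < k) (hf : ∀ a ∈ l, f a + 1 < 2 ^ k)
    (h : twos (pack k l fun _ => 1) (pack k l f) ≠ 0) : ∃ a ∈ l, f a % 4 = 2 := by
  contrapose! h
  have h2 : 2 * 1 < 2 ^ k := Nat.pow_lt_pow_right (m := 1) Nat.one_lt_two hk
  rw [← one_mul (pack k l fun _ => 1), twos_pack h2 hf,
    pack_congr fun a ha => not_not.mp (mt mod_four_eq_two_of_twos_ne_zero (h a ha)), pack_zero]

/-- Whether all `K`-bit fields of `Z` are nonzero, where `C` has a `1` in each field; adding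
`2 ^ (K - 1) - 1` to a field makes its top bit tell. -/
def allFieldsPos (K C Z : ℕ) : Bool :=
  Nat.beq ((Z + (2 ^ (K - 1) - 1) * C) &&& (2 ^ (K - 1) * C)) (2 ^ (K - 1) * C)

theorem ne_zero_of_allFieldsPos (hk : 0 < k) (hf : ∀ a ∈ l, f a < 2 ^ (k - 1))
    (h : allFieldsPos k (pack k l fun _ => 1) (pack k l f) = true) : ∀ a ∈ l, f a ≠ 0 := by
  have hpow : 2 ^ k = 2 ^ (k - 1) + 2 ^ (k - 1) := by
    rw [← mul_two, ← pow_succ, Nat.sub_add_cancel hk]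
  have hpos := Nat.two_pow_pos (k - 1)
  have hf' : ∀ a ∈ l, f a + (2 ^ (k - 1) - 1) * 1 < 2 ^ k := fun a ha => by
    have := hf a ha
    omega
  have hg : ∀ a ∈ l, 2 ^ (k - 1) * 1 < 2 ^ k := fun _ _ => by omega
  rw [allFieldsPos, Nat.beq_eq, ← pack_const_mul, ← pack_const_mul, ← pack_add,
    pack_land hf' hg] at h
  intro a ha h0
  have := eq_of_pack_eq hk (fun a ha => Nat.and_lt_two_pow _ (hg a ha)) hg h a ha
  rw [h0, zero_add, mul_one, mul_one, Nat.and_two_pow, Nat.testBit_two_pow_sub_one,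
    decide_eq_false (lt_irrefl _), Bool.toNat_false, zero_mul] at this
  exact hpos.ne this

/-- Whether `twos m (x + 2 * t) ≠ 0` for every field `x` of `X` and every sum `t` of a sublist of
the given list. All these numbers are collected, in `K`-bit fields, by doubling `X` for each entry
of the list; `s` is the number of bits of `X`, and `C` has a `1` in each field. -/
def twosTest (K m : ℕ) : List ℕ → ℕ → ℕ → ℕ → Bool
  | [], X, C, _ => allFieldsPos K C (twos (m * C) X)
  | v :: l, X, C, s => twosTest K m l (X + (X + 2 * v * C) * 2 ^ s) (C + C * 2 ^ s) (2 * s)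

theorem twos_ne_zero_of_twosTest {m : ℕ} (hk : 0 < k) (hm : 2 * m < 2 ^ k) {xs vs : List ℕ}
    (hxs : ∀ x ∈ xs, x + 2 * vs.sum + m < 2 ^ (k - 1))
    (h : twosTest k m vs (pack k xs id) (pack k xs fun _ => 1) (k * xs.length) = true) :
    ∀ x ∈ xs, ∀ ts : List ℕ, ts.Sublist vs → twos m (x + 2 * ts.sum) ≠ 0 := by
  induction vs generalizing xs with
  | nil =>
    have hpow : 2 ^ (k - 1) ≤ 2 ^ k := Nat.pow_le_pow_right two_pos (Nat.sub_le k 1)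
    simp only [List.sum_nil, mul_zero, add_zero] at hxs
    rw [twosTest, twos_pack (f := id) hm fun x hx => (hxs x hx).trans_le hpow] at h
    intro x hx ts hts
    rw [List.sublist_nil.mp hts, List.sum_nil, mul_zero, add_zero]
    exact ne_zero_of_allFieldsPos hk
      (fun x hx => (twos_le m x).trans_lt ((Nat.le_add_right x m).trans_lt (hxs x hx))) h x hx
  | cons v vs ih =>
    let xs' := xs ++ xs.map (· + 2 * v)
    have pack_xs' : pack k xs' id = pack k xs id +
        (pack k xs id + 2 * v * pack k xs fun _ => 1) * 2 ^ (k * xs.length) := by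
      rw [pack_append, pack_map, mul_comm (2 ^ _), ← pack_const_mul, ← pack_add]
      simp only [mul_one, id]
    have pack_one_xs' : (pack k xs' fun _ => 1) =
        (pack k xs fun _ => 1) + (pack k xs fun _ => 1) * 2 ^ (k * xs.length) := by
      rw [pack_append, pack_map, mul_comm (2 ^ _)]
    have length_xs' : k * xs'.length = 2 * (k * xs.length) := by
      rw [List.length_append, List.length_map]
      ring
    rw [twosTest, ← pack_xs', ← pack_one_xs', ← length_xs'] at h
    have ih := ih (xs := xs') (by
      simp only [List.sum_cons] at hxs
      simp only [xs', List.forall_mem_append, List.forall_mem_map]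
      exact ⟨fun x hx => by grind, fun x hx => by grind⟩) h
    intro x hx ts hts
    rcases List.sublist_cons_iff.mp hts with hts | ⟨ts', rfl, hts'⟩
    · exact ih x (List.mem_append_left _ hx) ts hts
    · rw [List.sum_cons, mul_add, ← add_assoc]
      exact ih _ (List.mem_append_right _ (List.mem_map_of_mem hx)) ts' hts'

end Packing

section Search

/-- Depth-first search over the subsets of size `r` of a list, calling `leaf` on the sum of the
numbers `row i` over the subset and the list of these numbers. The account `d` is charged `cost i`
for each entry of the list and credited `gain` for each chosen one; branches on which it would
become negative are skipped. (Written with recursors and the binary operations of `ℕ`, which the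
kernel evaluates faster than the compiled pattern matching and the type class operations.) -/
noncomputable def search {ι : Type} (row cost : ι → ℕ) (gain : ℕ) (leaf : ℕ → List ℕ → Bool) :
    List ι → ℕ → ℕ → ℕ → List ℕ → Bool :=
  List.rec (fun _ _ N vs => leaf N vs) fun i _ ih r d N vs =>
    Nat.rec (leaf N vs) (fun r' _ =>
      Bool.rec false
        (Bool.rec true (ih r (Nat.sub d (cost i)) N vs) (Nat.ble (cost i) d))
        (Bool.rec true
          (ih r' (Nat.sub (Nat.add d gain) (cost i)) (Nat.add N (row i)) (row i :: vs))
          (Nat.ble (cost i) (Nat.add d gain)))) r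

variable {ι : Type} {row cost : ι → ℕ} {gain : ℕ} {leaf : ℕ → List ℕ → Bool}

theorem search_cons_succ {i : ι} {l : List ι} {r d N : ℕ} {vs : List ℕ}
    (h : search row cost gain leaf (i :: l) (r + 1) d N vs = true) :
    (cost i ≤ d → search row cost gain leaf l (r + 1) (d - cost i) N vs = true) ∧
    (cost i ≤ d + gain →
      search row cost gain leaf l r (d + gain - cost i) (N + row i) (row i :: vs) = true) := by
  have and_of_rec {x y : Bool} (h : Bool.rec false x y = true) : x = true ∧ y = true := by
    cases x <;> cases y <;> simp_all
  have imp_of_rec {m n : ℕ} {x : Bool} (h : Bool.rec true x (Nat.ble m n) = true) :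
      m ≤ n → x = true := fun hmn => by rwa [Nat.ble_eq_true_of_le hmn] at h
  exact (and_of_rec h).imp imp_of_rec imp_of_rec

theorem leaf_of_search (q : ι → Bool) {l : List ι} {d N : ℕ} {vs : List ℕ}
    (hsolvent : ∀ p, p <+: l → (p.map cost).sum ≤ d + gain * p.countP q)
    (h : search row cost gain leaf l (l.countP q) d N vs = true) :
    leaf (N + ((l.filter q).map row).sum) (((l.filter q).map row).reverse ++ vs) = true := by
  induction l generalizing d N vs with
  | nil => exact h
  | cons i l ih =>
    rcases hr : (i :: l).countP q with - | r
    · rw [hr] at h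
      have filter_eq_nil : (i :: l).filter q = [] := by
        rwa [← List.length_eq_zero_iff, ← List.countP_eq_length_filter]
      rwa [filter_eq_nil]
    rw [hr] at h
    have solvent_cons (p) (hp : p <+: l) := hsolvent (i :: p) ((List.prefix_cons_inj i).mpr hp)
    simp only [List.map_cons, List.sum_cons] at solvent_cons
    by_cases hi : q i
    · simp only [List.countP_cons_of_pos hi, mul_add_one] at hr solvent_cons
      obtain rfl := Nat.succ.inj hr
      have hcost : cost i ≤ d + gain := by simpa using solvent_cons [] List.nil_prefix
      have := ih (fun p hp => by have := solvent_cons p hp; omega) ((search_cons_succ h).2 hcost)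
      simpa [List.filter_cons_of_pos hi, add_assoc] using this
    · simp only [List.countP_cons_of_neg hi] at hr solvent_cons
      have hcost : cost i ≤ d := by simpa using solvent_cons [] List.nil_prefix
      rw [List.filter_cons_of_neg hi]
      refine ih (d := d - cost i) (fun p hp => by have := solvent_cons p hp; omega) ?_
      rw [hr]
      exact (search_cons_succ h).1 hcost

end Search

section OddPart

variable {ι κ : Type*}

/-- The vector obtained from `u` by replacing its coordinates `2` by `0`. -/
def oddPart (u : ι → ZMod 4) : ι → ZMod 4 := fun i => if u i = 2 then 0 else u i

theorem oddPart_eq_self {u : ι → ZMod 4} (hu : ∀ i, u i ≠ 2) : oddPart u = u :=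
  funext fun i => if_neg (hu i)

theorem oddPart_add_single [DecidableEq ι] {u : ι → ZMod 4} {i : ι} (hi : u i = 2)
    (hu : ∀ i' ≠ i, u i' ≠ 2) : oddPart u + Pi.single i 2 = u := by
  funext i'
  rcases eq_or_ne i' i with rfl | hne
  · simp [oddPart, hi]
  · simp [oddPart, hne, hu i' hne]

variable [Fintype ι] [Fintype κ] {A : Matrix ι κ (ZMod 4)} {u : ι → ZMod 4}

theorem nCount_two_ne_zero_of_oddPart (h : ∃ j, (oddPart u ᵥ* A) j = 2) :
    nCount 2 (Sum.elim u (u ᵥ* A)) ≠ 0 := by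
  intro h0
  have ne_two (k) : Sum.elim u (u ᵥ* A) k ≠ 2 :=
    filter_eq_empty_iff.mp (card_eq_zero.mp h0) (mem_univ k)
  have hu : oddPart u = u := oddPart_eq_self fun i => ne_two (.inl i)
  rw [hu] at h
  exact h.elim fun j => ne_two (.inr j)

theorem nCount_two_ne_one_of_oddPart [DecidableEq κ]
    (h : ∀ k, ∃ j, (oddPart u ᵥ* A) j + 2 * fromRows A (1 : Matrix κ κ (ZMod 4)) k j = 2) :
    nCount 2 (Sum.elim u (u ᵥ* A)) ≠ 1 := by
  classical
  intro h1
  obtain ⟨k, hk⟩ := card_eq_one.mp h1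
  have eq_two_iff (k') : Sum.elim u (u ᵥ* A) k' = 2 ↔ k' = k := by
    rw [← mem_filter_univ (p := fun i => Sum.elim u (u ᵥ* A) i = 2), hk, mem_singleton]
  obtain ⟨j, hj⟩ := h k
  rcases k with i | j₀
  · have hu : oddPart u + Pi.single i 2 = u :=
      oddPart_add_single ((eq_two_iff (.inl i)).mpr rfl) fun i' hi' h =>
        hi' (Sum.inl_injective ((eq_two_iff (.inl i')).mp h))
    have hv : (u ᵥ* A) j = (oddPart u ᵥ* A) j + 2 * A i j := by
      conv_lhs => rw [← hu, add_vecMul, single_vecMul]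
      rfl
    exact Sum.inr_ne_inl ((eq_two_iff (.inr j)).mp (hv.trans hj))
  · have hu : oddPart u = u :=
      oddPart_eq_self fun i h => Sum.inl_ne_inr ((eq_two_iff (.inl i)).mp h)
    have hj₀ : (u ᵥ* A) j₀ = 2 := (eq_two_iff (.inr j₀)).mpr rfl
    rw [hu, fromRows_apply_inr, one_apply] at hj
    split_ifs at hj with h
    · rw [← h, hj₀] at hj
      exact absurd hj (by decide)
    · rw [mul_zero, add_zero] at hj
      exact h (Sum.inr_injective ((eq_two_iff (.inr j)).mp hj)).symm

end OddPart

section Leaf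

variable {ι κ : Type} {k K : ℕ} {is : List ι}

/-- Row `i` of `A`, stored in consecutive `k`-bit fields. -/
def packRow (k : ℕ) (js : List κ) (A : Matrix ι κ (ZMod 4)) (i : ι) : ℕ :=
  pack k js fun j => (A i j).val

theorem sum_map_packRow (k : ℕ) (js : List κ) (A : Matrix ι κ (ZMod 4)) (L : List ι) :
    (L.map (packRow k js A)).sum = pack k js fun j => (L.map fun i => (A i j).val).sum :=
  (pack_list_sum k js L fun i j => (A i j).val).symm

theorem sum_map_val_le (A : Matrix ι κ (ZMod 4)) (q : ι → Bool) (is : List ι) (j : κ) :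
    ((is.filter q).map fun i => (A i j).val).sum ≤ 3 * is.length := by
  calc ((is.filter q).map fun i => (A i j).val).sum
      ≤ ((is.filter q).map fun i => (A i j).val).length • 3 :=
        List.sum_le_card_nsmul _ _ <| List.forall_mem_map.mpr fun i _ =>
          Nat.le_of_lt_succ (ZMod.val_lt (A i j))
    _ ≤ 3 * is.length := by
        rw [List.length_map, smul_eq_mul, mul_comm]
        exact Nat.mul_le_mul_left 3 (List.length_filter_le q is)

theorem sum_map_filter [Fintype ι] {R : Type*} [AddCommMonoidWithOne R]
    (his : (is : Multiset ι) = univ.val) (q : ι → Bool) (f : ι → ℕ) :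
    (((is.filter q).map f).sum : R) = ∑ i, if q i then (f i : R) else 0 := by
  rw [Finset.sum, ← his, Multiset.map_coe, Multiset.sum_coe]
  clear his
  induction is with
  | nil => exact Nat.cast_zero
  | cons i is ih => cases hi : q i <;> simp [hi, ih]

theorem natCast_sum_map_odd_add [Fintype ι] (his : (is : Multiset ι) = univ.val)
    (A : Matrix ι κ (ZMod 4)) (u : ι → ZMod 4) (j : κ) :
    (((is.filter (res2 u · ≠ 0)).map fun i => (A i j).val).sum : ZMod 4) +
      2 * ((is.filter (u · = 3)).map fun i => (A i j).val).sum = (oddPart u ᵥ* A) j := by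
  have entry : ∀ a b : ZMod 4, (if a = 1 ∨ a = 3 then b else 0) + 2 * (if a = 3 then b else 0) =
      (if a = 2 then 0 else a) * b := by decide
  simp only [sum_map_filter his, ZMod.natCast_zmod_val, decide_eq_true_eq, res2_ne_zero_iff,
    mul_sum, ← sum_add_distrib, entry]
  rfl

theorem natCast_sum_map_odd [Fintype ι] (his : (is : Multiset ι) = univ.val)
    (A : Matrix ι κ (ZMod 4)) (u : ι → ZMod 4) (j : κ) :
    (((is.filter (res2 u · ≠ 0)).map fun i => (A i j).val).sum : ZMod 2) = res2 (u ᵥ* A) j := by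
  have entry : ∀ a b : ZMod 4, (if a = 1 ∨ a = 3 then (b.val : ZMod 2) else 0) =
      ZMod.castHom (by norm_num : 2 ∣ 4) (ZMod 2) (a * b) := by decide
  simp only [sum_map_filter his, decide_eq_true_eq, res2_ne_zero_iff, entry, ← map_sum]
  rfl

/-- The packed rows of `A` at the odd coordinates of `u`. -/
def oddRows (k : ℕ) (is : List ι) (A : Matrix ι ι (ZMod 4)) (u : ι → ZMod 4) : List ℕ :=
  (is.filter (res2 u · ≠ 0)).map (packRow k is A)

/-- The number of odd fields of `N`, where `m` has a `1` in each `k`-bit field and `q = 2 ^ k - 1`: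
modulo `q`, a number is congruent to the sum of its fields. -/
def oddFields (m q N : ℕ) : ℕ := Nat.mod (Nat.land N m) q

theorem oddFields_sum_oddRows [Fintype ι] (his : (is : Multiset ι) = univ.val)
    (hk : 9 * is.length + 7 < 2 ^ k) (A : Matrix ι ι (ZMod 4)) (u : ι → ZMod 4) :
    oddFields (pack k is fun _ => 1) (2 ^ k - 1) (oddRows k is A u).sum =
      hWt (res2 (u ᵥ* A)) := by
  let f (j : ι) : ℕ := ((is.filter (res2 u · ≠ 0)).map fun i => (A i j).val).sum
  have hf_lt : ∀ j ∈ is, f j < 2 ^ k := fun j _ => by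
    have : f j ≤ 3 * is.length := sum_map_val_le A _ is j
    omega
  have land_one (j : ι) : f j &&& 1 = if res2 (u ᵥ* A) j ≠ 0 then 1 else 0 := by
    rw [← natCast_sum_map_odd his, Nat.and_one_is_mod, ← ZMod.val_natCast]
    generalize ((f j : ℕ) : ZMod 2) = a
    decide +revert
  have hsum : (is.map fun j => f j &&& 1).sum = hWt (res2 (u ᵥ* A)) := by
    simp only [land_one, hWt, card_filter]
    rw [Finset.sum, ← his, Multiset.map_coe, Multiset.sum_coe]
  have hlt : hWt (res2 (u ᵥ* A)) < 2 ^ k - 1 := by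
    have : hWt (res2 (u ᵥ* A)) ≤ is.length := by
      rw [← Multiset.coe_card, his]
      exact card_le_univ _
    omega
  rw [oddRows, sum_map_packRow]
  change (pack k is f &&& pack k is fun _ => 1) % (2 ^ k - 1) = _
  rw [pack_land hf_lt fun _ _ => by omega]
  rw [pack_modEq_sum k is, hsum, Nat.mod_eq_of_lt hlt]

/-- Test for the codewords `Sum.elim u (u ᵥ* A)` with given odd coordinates, `w` in number, where
the rows of `A` at the odd coordinates of `u` are listed in `vs` and `N` is their sum: if `w = 16`,
then `n₂` is never `0`; otherwise `w = 12` and `n₂` is never `1`. -/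
def lightTest [DecidableEq ι] (k K : ℕ) (is : List ι) (A : Matrix ι ι (ZMod 4))
    (w N : ℕ) (vs : List ℕ) : Bool :=
  bif Nat.beq w 16 then twosTest K (pack k is fun _ => 1) vs N 1 K
  else Nat.beq w 12 && twosTest K (pack k is fun _ => 1) vs
    (N * (pack K (is.map Sum.inl ++ is.map Sum.inr) fun _ => 1) +
      2 * pack K (is.map Sum.inl ++ is.map Sum.inr) (packRow k is (fromRows A 1)))
    (pack K (is.map Sum.inl ++ is.map Sum.inr) fun _ => 1)
    (K * (is.map Sum.inl ++ is.map Sum.inr).length)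

/-- Passes codewords with at least `17` odd coordinates, of which `t` are given and the others are
counted by `oddFields m q N`, and applies the test `light` to all other codewords. (Written like
`search`.) -/
noncomputable def leafTest (m q t : ℕ) (light : ℕ → ℕ → List ℕ → Bool) (N : ℕ)
    (vs : List ℕ) : Bool :=
  Bool.rec (light (Nat.add t (oddFields m q N)) N vs) true
    (Nat.ble 17 (Nat.add t (oddFields m q N)))

theorem exists_eq_two_of_twos_ne_zero [Fintype ι] (his : (is : Multiset ι) = univ.val)
    (hk : 9 * is.length + 7 < 2 ^ k) (A : Matrix ι ι (ZMod 4)) (u : ι → ZMod 4) {g : ι → ZMod 4}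
    (h : twos (pack k is fun _ => 1) ((oddRows k is A u).sum +
      2 * pack k is (fun j => (g j).val) +
      2 * ((is.filter (u · = 3)).map (packRow k is A)).sum) ≠ 0) :
    ∃ j, (oddPart u ᵥ* A) j + 2 * g j = 2 := by
  simp only [oddRows, sum_map_packRow, ← pack_const_mul, ← pack_add] at h
  have hk1 : 1 < k := (Nat.pow_lt_pow_iff_right Nat.one_lt_two).mp (by omega : 2 ^ 1 < 2 ^ k)
  obtain ⟨j, -, hj⟩ := exists_mod_four_eq_two_of_twos_pack_ne_zero hk1 (fun j _ => by
    have hodd := sum_map_val_le A (res2 u · ≠ 0) is j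
    have hthree := sum_map_val_le A (u · = 3) is j
    have hg := ZMod.val_lt (g j)
    omega) h
  refine ⟨j, ?_⟩
  rw [← natCast_sum_map_odd_add his, ← ZMod.natCast_zmod_val (g j), add_right_comm]
  exact_mod_cast (ZMod.natCast_eq_natCast_iff' _ 2 4).mpr hj

theorem oddRows_sum_add_lt (hk : 9 * is.length + 7 < 2 ^ k) (hK : k * is.length < K)
    (A : Matrix ι ι (ZMod 4)) (u : ι → ZMod 4) (g : ι → ZMod 4) :
    (oddRows k is A u).sum + 2 * pack k is (fun j => (g j).val) + 2 * (oddRows k is A u).sum +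
      pack k is (fun _ => 1) < 2 ^ (K - 1) := by
  simp only [oddRows, sum_map_packRow, ← pack_const_mul, ← pack_add]
  have hk0 : 0 < k := (Nat.pow_lt_pow_iff_right Nat.one_lt_two).mp (by omega : 2 ^ 0 < 2 ^ k)
  refine (pack_lt hk0 fun j _ => ?_).trans_le
    (Nat.pow_le_pow_right two_pos (Nat.le_sub_one_of_lt hK))
  have hodd := sum_map_val_le A (res2 u · ≠ 0) is j
  have hg := ZMod.val_lt (g j)
  omega

theorem exists_eq_two_of_twosTest [Fintype ι] (his : (is : Multiset ι) = univ.val)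
    (hk : 9 * is.length + 7 < 2 ^ k) (hK : k * is.length < K) (A : Matrix ι ι (ZMod 4))
    (u : ι → ZMod 4) {β : Type} (ys : List β) (g : β → ι → ZMod 4)
    (h : twosTest K (pack k is fun _ => 1) (oddRows k is A u).reverse
      (pack K ys fun y => (oddRows k is A u).sum + 2 * pack k is (fun j => (g y j).val))
      (pack K ys fun _ => 1) (K * ys.length) = true) :
    ∀ y ∈ ys, ∃ j, (oddPart u ᵥ* A) j + 2 * g y j = 2 := by
  intro y hy
  have sublist : ((is.filter (u · = 3)).map (packRow k is A)).Sublist (oddRows k is A u) :=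
    (List.monotone_filter_right is fun i hi => by
      simp_all [res2_ne_zero_iff]).map _
  let xs := ys.map fun y => (oddRows k is A u).sum + 2 * pack k is (fun j => (g y j).val)
  have hxs : ∀ x ∈ xs, x + 2 * (oddRows k is A u).reverse.sum +
      pack k is (fun _ => 1) < 2 ^ (K - 1) := List.forall_mem_map.mpr fun y _ => by
    rw [List.sum_reverse]
    exact oddRows_sum_add_lt hk hK A u (g y)
  have hm : 2 * pack k is (fun _ => 1) < 2 ^ K := by
    have := hxs _ (List.mem_map_of_mem hy)
    rw [show K = K - 1 + 1 by omega, pow_succ]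
    omega
  have h' := twos_ne_zero_of_twosTest (xs := xs) (by omega) hm hxs
    (by rwa [pack_map, pack_map, List.length_map])
    _ (List.mem_map_of_mem hy) _ (List.reverse_sublist.mpr sublist)
  rw [List.sum_reverse] at h'
  exact exists_eq_two_of_twos_ne_zero his hk A u h'

theorem weights_of_leafTest [Fintype ι] [DecidableEq ι] (his : (is : Multiset ι) = univ.val)
    (hk : 9 * is.length + 7 < 2 ^ k) (hK : k * is.length < K) (A : Matrix ι ι (ZMod 4))
    (u : ι → ZMod 4)
    (h : leafTest (pack k is fun _ => 1) (2 ^ k - 1) (hWt (res2 u)) (lightTest k K is A)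
      (oddRows k is A u).sum (oddRows k is A u).reverse = true) :
    12 ≤ hWt (res2 (Sum.elim u (u ᵥ* A))) ∧ eucWt (Sum.elim u (u ᵥ* A)) ≠ 16 := by
  have or_of_rec {a b : Bool} (h : Bool.rec b true a = true) : a = true ∨ b = true := by
    cases a <;> simp_all
  have hE := eucWt_eq_hWt_add_nCount (Sum.elim u (u ᵥ* A))
  rw [leafTest, oddFields_sum_oddRows his hk, Nat.add_eq, ← hWt_res2_sumElim] at h
  rcases or_of_rec h with h17 | hlight
  · have := Nat.le_of_ble_eq_true h17
    omega
  rw [lightTest, Bool.cond_eq_ite] at hlight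
  split_ifs at hlight with h16
  · have := Nat.eq_of_beq_eq_true h16
    have two_ne_zero := nCount_two_ne_zero_of_oddPart (A := A) (u := u) <| by
      simpa using exists_eq_two_of_twosTest his hk hK A u [()] 0 (by simpa [pack] using hlight)
    omega
  · obtain ⟨h12, htest⟩ := Bool.and_eq_true_iff.mp hlight
    have := Nat.eq_of_beq_eq_true h12
    let ys : List (ι ⊕ ι) := is.map Sum.inl ++ is.map Sum.inr
    have mem_ys (y) : y ∈ ys := by
      have mem_is (i) : i ∈ is := by rw [← Multiset.mem_coe, his]; exact mem_univ i
      cases y <;> simp [ys, mem_is]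
    rw [← pack_const_mul, ← pack_const_mul, ← pack_add] at htest
    simp only [mul_one] at htest
    have two_ne_one := nCount_two_ne_one_of_oddPart fun y =>
      exists_eq_two_of_twosTest his hk hK A u ys (fromRows A 1) htest y (mem_ys y)
    omega

end Leaf

section Columns

variable {n : ℕ}

/-- The index set `Fin n ⊕ Fin n`, listed column by column as in `columnWt`. -/
def columns (n : ℕ) : List (Fin n ⊕ Fin n) := (List.finRange n).flatMap fun c => [.inl c, .inr c]

theorem coe_columns (n : ℕ) : (columns n : Multiset (Fin n ⊕ Fin n)) = univ.val := by
  refine (Multiset.Nodup.ext ?_ univ.nodup).mpr fun i => ?_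
  · rw [Multiset.coe_nodup, columns, List.nodup_flatMap]
    refine ⟨fun c _ => by simp, (List.nodup_finRange n).imp fun h => ?_⟩
    simpa [Function.onFun, List.Disjoint] using h
  · cases i <;> simp [columns]

theorem length_columns (n : ℕ) : (columns n).length = 2 * n := by
  simp [columns, mul_comm]

theorem exists_prefix_of_prefix_flatMap {α : Type*} (q : α ⊕ α → Bool) (t : ℕ) {L : List α}
    {p : List (α ⊕ α)} (hp : p <+: L.flatMap fun c => [.inl c, .inr c]) :
    ∃ L', L' <+: L ∧ (p.map (Sum.elim (fun _ => 0) fun _ => t)).sum = t * L'.length ∧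
      (L'.map fun c => (if q (.inl c) then 1 else 0) + if q (.inr c) then 1 else 0).sum ≤
        p.countP q := by
  induction L generalizing p with
  | nil => exact ⟨[], List.nil_prefix, by simp_all⟩
  | cons c L ih =>
    rcases p with - | ⟨_, - | ⟨_, p⟩⟩
    · exact ⟨[], List.nil_prefix, by simp⟩
    · simp only [List.flatMap_cons, List.cons_append, List.cons_prefix_cons] at hp
      exact ⟨[], List.nil_prefix, by simp [hp.1]⟩
    · simp only [List.flatMap_cons, List.cons_append, List.nil_append, List.cons_prefix_cons] at hp
      obtain ⟨rfl, rfl, hp⟩ := hp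
      obtain ⟨L', hL', hcost, hcount⟩ := ih hp
      refine ⟨c :: L', List.cons_prefix_cons.mpr ⟨rfl, hL'⟩, ?_, ?_⟩
      · simp only [List.map_cons, List.sum_cons, hcost, List.length_cons, Sum.elim_inl,
          Sum.elim_inr]
        ring
      · simp only [List.map_cons, List.sum_cons, List.countP_cons]
        omega

variable [NeZero n]

theorem columns_solvent {u : Fin n ⊕ Fin n → ZMod 4} {t : ℕ}
    (hu : ∀ m, t * m ≤ n * ∑ c ∈ range m, columnWt u c) {p : List (Fin n ⊕ Fin n)}
    (hp : p <+: columns n) :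
    (p.map (Sum.elim (fun _ => 0) fun _ => t)).sum ≤ n * p.countP (res2 u · ≠ 0) := by
  obtain ⟨L', hL', hcost, hcount⟩ :=
    exists_prefix_of_prefix_flatMap (fun i => decide (res2 u i ≠ 0)) t hp
  have sum_columnWt :
      (L'.map fun c => columnWt u c.val).sum = ∑ c ∈ range L'.length, columnWt u c := by
    have hrange : L'.map Fin.val = List.range L'.length := by
      have := List.prefix_iff_eq_take.mp (hL'.map Fin.val)
      rwa [List.map_coe_finRange_eq_range, List.length_map, List.take_range,
        min_eq_left (by simpa using hL'.length_le)] at this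
    change _ = ((List.range L'.length).map (columnWt u)).sum
    rw [← hrange, List.map_map]
    rfl
  calc _ = t * L'.length := hcost
    _ ≤ n * ∑ c ∈ range L'.length, columnWt u c := hu _
    _ = n * (L'.map fun c => columnWt u c.val).sum := by rw [sum_columnWt]
    _ ≤ _ := Nat.mul_le_mul_left n (by simpa [columnWt] using hcount)

/-- Search for codewords `Sum.elim u (u ᵥ* A)` violating the weight bounds with `t` odd coordinates
in `u`, which may be assumed to be balanced as in `exists_iterate_negaShift_balanced`; the value is
`true` if there are none. -/
noncomputable def weightTest (k K : ℕ) (A : Matrix (Fin n ⊕ Fin n) (Fin n ⊕ Fin n) (ZMod 4))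
    (t : ℕ) : Bool :=
  search (packRow k (columns n) A) (Sum.elim (fun _ => 0) fun _ => t) n
    (leafTest (pack k (columns n) fun _ => 1) (2 ^ k - 1) t (lightTest k K (columns n) A))
    (columns n) t 0 0 []

variable {A : Matrix (Fin n ⊕ Fin n) (Fin n ⊕ Fin n) (ZMod 4)} {k K : ℕ}

theorem weights_of_weightTest (hA : BlockNegacyclic A) (hk : 9 * (2 * n) + 7 < 2 ^ k)
    (hK : k * (2 * n) < K) {u : Fin n ⊕ Fin n → ZMod 4}
    (h : weightTest k K A (hWt (res2 u)) = true) :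
    12 ≤ hWt (res2 (Sum.elim u (u ᵥ* A))) ∧ eucWt (Sum.elim u (u ᵥ* A)) ≠ 16 := by
  obtain ⟨m, hm⟩ := exists_iterate_negaShift_balanced u
  have vecMul_semiconj : Function.Semiconj (· ᵥ* A) negaShift negaShift := negaShift_vecMul hA
  have vecMul_iterate : (negaShift^[m] u) ᵥ* A = negaShift^[m] (u ᵥ* A) :=
    vecMul_semiconj.iterate_right m u
  have hWt_iterate (x : Fin n ⊕ Fin n → ZMod 4) : hWt (res2 (negaShift^[m] x)) = hWt (res2 x) :=
    congrFun (Function.iterate_invariant (g := hWt ∘ res2) (funext hWt_res2_negaShift) m) x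
  have eucWt_iterate (x : Fin n ⊕ Fin n → ZMod 4) : eucWt (negaShift^[m] x) = eucWt x :=
    congrFun (Function.iterate_invariant (g := eucWt) (funext eucWt_negaShift) m) x
  have hcount : (columns n).countP (res2 (negaShift^[m] u) · ≠ 0) = hWt (res2 u) := by
    rw [← hWt_iterate, ← Multiset.coe_countP, coe_columns, Multiset.countP_eq_card_filter]
    simp [hWt, Finset.card]
  have hleaf := leaf_of_search (fun i => decide (res2 (negaShift^[m] u) i ≠ 0)) (d := 0)
    (fun p hp => by simpa using columns_solvent hm hp) (by rw [hcount]; exact h)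
  rw [zero_add, List.append_nil, ← hWt_iterate] at hleaf
  have := weights_of_leafTest (coe_columns n) (by rwa [length_columns]) (by rwa [length_columns])
    A _ hleaf
  simpa only [vecMul_iterate, hWt_res2_sumElim, eucWt_sumElim, hWt_iterate, eucWt_iterate]
    using this

end Columns

section WeightBounds

variable {n k K : ℕ} [NeZero n] {A M : Matrix (Fin n ⊕ Fin n) (Fin n ⊕ Fin n) (ZMod 4)}

theorem weights_of_forall_weightTest (hA : BlockNegacyclic A) (hk : 9 * (2 * n) + 7 < 2 ^ k)
    (hK : k * (2 * n) < K) {m : ℕ} (htest : ∀ t ∈ Icc 1 m, weightTest k K A t = true)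
    {u : Fin n ⊕ Fin n → ZMod 4} (hu : hWt (res2 u) ≤ m)
    (h0 : res2 (Sum.elim u (u ᵥ* A)) ≠ 0) :
    12 ≤ hWt (res2 (Sum.elim u (u ᵥ* A))) ∧ eucWt (Sum.elim u (u ᵥ* A)) ≠ 16 := by
  refine weights_of_weightTest hA hk hK (htest _ (mem_Icc.mpr ⟨Nat.one_le_iff_ne_zero.mpr ?_, hu⟩))
  rw [ne_eq, hWt_res2_eq_zero_iff]
  contrapose! h0
  obtain ⟨y, rfl⟩ := exists_two_smul_of_res2_eq_zero h0
  rw [smul_vecMul]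
  exact funext <| Sum.rec (congrFun h0) (congrFun (res2_two_smul (y ᵥ* A)))

theorem weights_of_weightTests (hM : M * Mᵀ = -1) (hnega : BlockNegacyclic M)
    (hk : 9 * (2 * n) + 7 < 2 ^ k) (hK : k * (2 * n) < K) {l r : ℕ} (hlr : 15 ≤ l + r)
    (hl : ∀ t ∈ Icc 1 l, weightTest k K M t = true)
    (hr : ∀ t ∈ Icc 1 r, weightTest k K (-Mᵀ) t = true)
    {x : (Fin n ⊕ Fin n) ⊕ (Fin n ⊕ Fin n) → ZMod 4} (hx : x ∈ systematicCode M)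
    (hx0 : res2 x ≠ 0) : 12 ≤ hWt (res2 x) ∧ eucWt x ≠ 16 := by
  obtain ⟨u, rfl⟩ := mem_systematicCode.mp hx
  by_cases hul : hWt (res2 u) ≤ l
  · exact weights_of_forall_weightTest hnega hk hK hl hul hx0
  generalize hv : u ᵥ* M = v at hx0 ⊢
  by_cases hvr : hWt (res2 v) ≤ r
  · obtain rfl : v ᵥ* (-Mᵀ) = u := by
      rw [← hv, vecMul_vecMul, mul_neg, hM, neg_neg, vecMul_one]
    have hWt_swap (w : Fin n ⊕ Fin n → ZMod 4) :
        hWt (res2 (Sum.elim w v)) = hWt (res2 (Sum.elim v w)) := by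
      rw [hWt_res2_sumElim, add_comm, ← hWt_res2_sumElim]
    rw [ne_eq, ← hWt_res2_eq_zero_iff, hWt_swap, hWt_res2_eq_zero_iff] at hx0
    rw [hWt_swap, eucWt_sumElim, add_comm, ← eucWt_sumElim]
    exact weights_of_forall_weightTest hnega.neg_transpose hk hK hr hvr hx0
  · have hE := eucWt_eq_hWt_add_nCount (Sum.elim u v)
    rw [hWt_res2_sumElim] at hE ⊢
    omega

end WeightBounds

section C56

/-- The matrix `M` of the systematic generator matrix `(I | M)` of the code `C₅₆`. -/
def c56Matrix : Matrix (Fin 14 ⊕ Fin 14) (Fin 14 ⊕ Fin 14) (ZMod 4) :=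
  fourNegaM ![1,1,1,3,0,2,1,3,1,1,2,2,1,2] ![3,0,1,0,1,1,1,0,0,0,1,0,0,0]

theorem c56Matrix_mul_transpose : c56Matrix * c56Matrixᵀ = -1 := by decide +kernel

theorem typeII_c56 :
    TypeII (systematicCode c56Matrix : Set ((Fin 14 ⊕ Fin 14) ⊕ (Fin 14 ⊕ Fin 14) → ZMod 4)) :=
  typeII_systematicCode c56Matrix_mul_transpose (by decide +kernel)

set_option maxHeartbeats 0 in
-- Hundreds of thousands of sets are visited. Within one theorem, the evaluations run in sequence
-- and can reuse each other's memory.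
theorem weightTests_c56Matrix : (∀ t ∈ Icc 1 8, weightTest 10 288 c56Matrix t = true) ∧
    ∀ t ∈ Icc 1 7, weightTest 10 288 (-c56Matrixᵀ) t = true := by
  constructor <;>
    intro t ht <;>
    rw [mem_Icc] at ht <;>
    obtain ⟨h1, h2⟩ := ht <;>
    interval_cases t <;>
    decide +kernel

theorem le_weights_c56 {x : (Fin 14 ⊕ Fin 14) ⊕ (Fin 14 ⊕ Fin 14) → ZMod 4}
    (hx : x ∈ systematicCode c56Matrix) (hx0 : x ≠ 0) : 24 ≤ eucWt x ∧ 18 ≤ leeWt x := by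
  refine le_weights_systematicCode typeII_c56 (fun x hx => ?_) hx hx0
  exact weights_of_weightTests c56Matrix_mul_transpose (blockNegacyclic_fourNegaM _ _)
    (by norm_num) (by norm_num) le_rfl weightTests_c56Matrix.1 weightTests_c56Matrix.2 hx

theorem exists_min_weight_c56 :
    ∃ x ∈ systematicCode c56Matrix, x ≠ 0 ∧ eucWt x = 24 ∧ leeWt x = 18 := by
  let u : Fin 14 ⊕ Fin 14 → ZMod 4 := Sum.elim ![3,0,1,3,0,1,0,0,0,0,0,1,0,0] 0
  refine ⟨Sum.elim u (u ᵥ* c56Matrix), sumElim_mem_systematicCode.mpr rfl, ?_⟩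
  decide +kernel

end C56

end Z4Note

open Z4Note in
/-- the four-negacirculant code `C₅₆` is an extremal Type II
`ZMod 4`-code of length 56 (minimum Euclidean weight 24) with minimum Lee weight 18. -/
theorem fourNega_code_C56_properties :
    let C : Submodule (ZMod 4) (((Fin 14 ⊕ Fin 14) ⊕ (Fin 14 ⊕ Fin 14)) → ZMod 4) :=
      fourNegaCode ![1,1,1,3,0,2,1,3,1,1,2,2,1,2] ![3,0,1,0,1,1,1,0,0,0,1,0,0,0]
    SelfDualZ4 C ∧
    TypeII (C : Set (((Fin 14 ⊕ Fin 14) ⊕ (Fin 14 ⊕ Fin 14)) → ZMod 4)) ∧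
    minEuc (C : Set (((Fin 14 ⊕ Fin 14) ⊕ (Fin 14 ⊕ Fin 14)) → ZMod 4)) = 24 ∧
    minLee (C : Set (((Fin 14 ⊕ Fin 14) ⊕ (Fin 14 ⊕ Fin 14)) → ZMod 4)) = 18 := by
  intro C
  have hC : C = systematicCode c56Matrix := fourNegaCode_eq_systematicCode _ _
  obtain ⟨x, hx, hx0, hxE, hxL⟩ := exists_min_weight_c56
  rw [hC]
  exact ⟨selfDualZ4_systematicCode c56Matrix_mul_transpose, typeII_c56,
    minEuc_eq ⟨x, hx, hx0, hxE⟩ fun y hy hy0 => (le_weights_c56 hy hy0).1,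
    minLee_eq ⟨x, hx, hx0, hxL⟩ fun y hy hy0 => (le_weights_c56 hy hy0).2⟩
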